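/- Let A generate an α-times resolvent family {S_α(t)}_{t≥0} on X, where 1 < α < 2, let r > 0, let f : [0,r] → X be continuous and x, y ∈ D(A). If (P_α*f)(t) ∈ D(A) for every t ∈ [0,r] and the map t ↦ A((P_α*f)(t)) is continuous on [0,r], then u(t) = S_α(t)x + ∫_0^t S_α(s)y ds + (P_α*f)(t) is a strong solution of D_t^α u = Au + f on [0,r] with u(0) = x, u'(0) = y. -/

import Mathlib

open MeasureTheory Set

/-- `g β t = t^(β-1)/Γ(β)`. -/
noncomputable def g (β t : ℝ) : ℝ := t ^ (β - 1) / Real.Gamma β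

/-- `Pa α S t x = (g_{α-1} * S)(t) x = ∫_0^t g_{α-1}(t-s) S(s) x ds`. -/
noncomputable def Pa {X : Type*} [NormedAddCommGroup X] [NormedSpace ℂ X]
    (α : ℝ) (S : ℝ → X →L[ℂ] X) (t : ℝ) (x : X) : X :=
  ∫ s in (0:ℝ)..t, g (α - 1) (t - s) • S s x

/-- `u` is a strong solution of `D_t^α u = A u + f` on `[0, r]`, `u 0 = x`, `u' 0 = y`:
`u` takes values in `D(A)` with `t ↦ A u t` continuous (encoded via the graph of `A`),
`u` is continuously differentiable on `[0, r]`,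
`w t = ∫_0^t g_{2-α}(t-s) (u s - x - s y) ds` is twice continuously differentiable
on `[0, r]`, and `w'' t = A (u t) + f t` there. -/
def IsStrongSolution {X : Type*} [NormedAddCommGroup X] [NormedSpace ℂ X]
    (α : ℝ) (A : X →ₗ.[ℂ] X) (r : ℝ) (f : ℝ → X) (x y : X) (u : ℝ → X) : Prop :=
  ∃ Au u' w' w'' : ℝ → X,
    ContinuousOn u (Set.Icc 0 r) ∧
    (∀ t ∈ Set.Icc (0:ℝ) r, (u t, Au t) ∈ A.graph) ∧
    ContinuousOn Au (Set.Icc 0 r) ∧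
    (∀ t ∈ Set.Icc (0:ℝ) r, HasDerivWithinAt u (u' t) (Set.Icc 0 r) t) ∧
    ContinuousOn u' (Set.Icc 0 r) ∧
    (∀ t ∈ Set.Icc (0:ℝ) r,
      HasDerivWithinAt (fun τ => ∫ s in (0:ℝ)..τ, g (2 - α) (τ - s) • (u s - x - s • y))
        (w' t) (Set.Icc 0 r) t) ∧
    (∀ t ∈ Set.Icc (0:ℝ) r, HasDerivWithinAt w' (w'' t) (Set.Icc 0 r) t) ∧
    ContinuousOn w'' (Set.Icc 0 r) ∧
    (∀ t ∈ Set.Icc (0:ℝ) r, w'' t = Au t + f t) ∧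
    u 0 = x ∧ u' 0 = y


section aux
variable {X : Type*} [NormedAddCommGroup X] [NormedSpace ℂ X] [CompleteSpace X]

lemma tri_swap (t : ℝ) (ht : 0 ≤ t) (a b : ℝ → ℝ) (ha : IntervalIntegrable a volume 0 t)
    (hb : IntervalIntegrable b volume 0 t) (c : ℝ → ℝ → X)
    (hc : Continuous (Function.uncurry c)) :
    IntervalIntegrable (fun s => ∫ u in s..t, (a u * b s) • c u s) volume 0 t ∧
    ∫ u in (0:ℝ)..t, ∫ s in (0:ℝ)..u, (a u * b s) • c u s
      = ∫ s in (0:ℝ)..t, ∫ u in s..t, (a u * b s) • c u s := by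
  set μ := (volume : Measure ℝ).restrict (Ioc 0 t) with hμ
  rw [intervalIntegrable_iff_integrableOn_Ioc_of_le ht] at ha hb ⊢
  have hab : Integrable (fun p : ℝ × ℝ => a p.1 * b p.2) (μ.prod μ) := Integrable.mul_prod ha hb
  obtain ⟨C, hC⟩ := ((isCompact_Icc (a := (0:ℝ)) (b := t)).prod
    (isCompact_Icc (a := (0:ℝ)) (b := t))).exists_bound_of_continuousOn hc.continuousOn
  have hK : Integrable (fun p : ℝ × ℝ => (a p.1 * b p.2) • c p.1 p.2) (μ.prod μ) := by
    refine Integrable.smul_bdd (𝕜 := ℝ) (f := fun p : ℝ × ℝ => c p.1 p.2) (C := C) hab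
      hc.aestronglyMeasurable ?_
    rw [hμ, Measure.prod_restrict]
    filter_upwards [ae_restrict_mem (measurableSet_Ioc.prod measurableSet_Ioc)] with p hp
    exact hC p ⟨Ioc_subset_Icc_self hp.1, Ioc_subset_Icc_self hp.2⟩
  have hm : MeasurableSet {p : ℝ × ℝ | p.2 ≤ p.1} :=
    (isClosed_le continuous_snd continuous_fst).measurableSet
  have hI := hK.indicator hm
  set K := {p : ℝ × ℝ | p.2 ≤ p.1}.indicator
    (fun p : ℝ × ℝ => (a p.1 * b p.2) • c p.1 p.2) with hKdef
  have h1 : ∀ u ∈ Ioc 0 t, ∫ s, K (u, s) ∂μ = ∫ s in (0:ℝ)..u, (a u * b s) • c u s := by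
    intro u hu
    have : (fun s => K (u, s)) = (Iic u).indicator (fun s => (a u * b s) • c u s) := by
      ext s
      simp [hKdef, indicator]
    rw [this, integral_indicator measurableSet_Iic, hμ, Measure.restrict_restrict measurableSet_Iic,
      intervalIntegral.integral_of_le hu.1.le]
    congr 2
    ext s
    simp only [mem_inter_iff, mem_Iic, mem_Ioc]
    constructor
    · rintro ⟨h, h', _⟩; exact ⟨h', h⟩
    · rintro ⟨h, h'⟩; exact ⟨h', h, h'.trans hu.2⟩
  have h2 : ∀ s ∈ Ioc 0 t, ∫ u, K (u, s) ∂μ = ∫ u in s..t, (a u * b s) • c u s := by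
    intro s hs
    have : (fun u => K (u, s)) = (Ici s).indicator (fun u => (a u * b s) • c u s) := by
      ext u
      simp [hKdef, indicator]
    rw [this, integral_indicator measurableSet_Ici, hμ, Measure.restrict_restrict measurableSet_Ici,
      intervalIntegral.integral_of_le hs.2, ← integral_Icc_eq_integral_Ioc]
    congr 2
    ext u
    simp only [mem_inter_iff, mem_Ici, mem_Ioc, mem_Icc]
    constructor
    · rintro ⟨h, h', h''⟩; exact ⟨h, h''⟩
    · rintro ⟨h, h'⟩; exact ⟨h, hs.1.trans_le h, h'⟩
  constructor
  · refine (hI.integral_prod_right).congr ?_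
    filter_upwards [ae_restrict_mem measurableSet_Ioc] with s hs
    exact h2 s hs
  · rw [intervalIntegral.integral_of_le ht, intervalIntegral.integral_of_le ht]
    rw [← setIntegral_congr_fun measurableSet_Ioc h1, ← setIntegral_congr_fun measurableSet_Ioc h2]
    exact integral_integral_swap (f := fun u s => K (u, s)) hI

lemma graph_integral (G : Submodule ℂ (X × X)) (hG : IsClosed (G : Set (X × X)))
    (p q : ℝ → X) (t : ℝ) (ht : 0 ≤ t) (hp : IntervalIntegrable p volume 0 t)
    (hq : IntervalIntegrable q volume 0 t) (h : ∀ s ∈ Icc 0 t, (p s, q s) ∈ G) :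
    (∫ s in (0:ℝ)..t, p s, ∫ s in (0:ℝ)..t, q s) ∈ G := by
  rw [intervalIntegrable_iff_integrableOn_Ioc_of_le ht] at hp hq
  rw [intervalIntegral.integral_of_le ht, intervalIntegral.integral_of_le ht,
    ← integral_pair hp hq]
  have hG' : IsClosed ((G.toAddSubgroup : AddSubgroup (X × X)) : Set (X × X)) := hG
  have : IsClosed (G : Set (X × X)) := hG
  have key := ContinuousLinearMap.integral_comp_comm (G.mkQL) (hp.prodMk hq)
  have h0 : ∫ s in Ioc 0 t, G.mkQL (p s, q s) = 0 := by
    rw [setIntegral_congr_fun (g := fun _ => 0) measurableSet_Ioc]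
    · simp
    · intro s hs
      exact (Submodule.Quotient.mk_eq_zero G).2 (h s (Ioc_subset_Icc_self hs))
  rw [h0] at key
  exact (Submodule.Quotient.mk_eq_zero G).1 key.symm

lemma graph_real_smul (G : Submodule ℂ (X × X)) (c : ℝ) (p q : X) (h : (p, q) ∈ G) :
    (c • p, c • q) ∈ G := by
  have := G.smul_mem (c : ℂ) h
  simpa using this

lemma S_joint (S : ℝ → X →L[ℂ] X)
    (hS_cont : ∀ x : X, ContinuousOn (fun t => S t x) (Ici (0:ℝ))) :
    Continuous (fun p : ℝ × X => S (max p.1 0) p.2) := by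
  have hc : ∀ z, Continuous (fun t : ℝ => S (max t 0) z) := fun z =>
    (hS_cont z).comp_continuous (by fun_prop) (fun t => le_max_right t 0)
  rw [continuous_iff_continuousAt]
  rintro ⟨t0, z0⟩
  obtain ⟨M, hM⟩ := banach_steinhaus (g := fun i : Icc (t0 - 1) (t0 + 1) => S (max (i:ℝ) 0)) (by
    intro z
    obtain ⟨C, hC⟩ := (isCompact_Icc (a := t0 - 1) (b := t0 + 1)).exists_bound_of_continuousOn
      (hc z).continuousOn
    exact ⟨C, fun i => hC i i.2⟩)
  rw [ContinuousAt, tendsto_iff_norm_sub_tendsto_zero]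
  have hlim : Filter.Tendsto (fun p : ℝ × X => M * ‖p.2 - z0‖ + ‖S (max p.1 0) z0 - S (max t0 0) z0‖)
      (nhds (t0, z0)) (nhds 0) := by
    have : Continuous (fun p : ℝ × X => M * ‖p.2 - z0‖ + ‖S (max p.1 0) z0 - S (max t0 0) z0‖) := by
      have := (hc z0).comp (continuous_fst (X := ℝ) (Y := X))
      exact (continuous_const.mul (continuous_snd.sub continuous_const).norm).add
        (this.sub continuous_const).norm
    simpa using this.tendsto (t0, z0)
  refine squeeze_zero' (Filter.Eventually.of_forall fun _ => norm_nonneg _) ?_ hlim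
  have hn : Icc (t0 - 1) (t0 + 1) ×ˢ (univ : Set X) ∈ nhds (t0, z0) :=
    prod_mem_nhds (Icc_mem_nhds (by linarith) (by linarith)) Filter.univ_mem
  filter_upwards [hn] with p hp
  have e : S (max p.1 0) p.2 - S (max t0 0) z0
    = S (max p.1 0) (p.2 - z0) + (S (max p.1 0) z0 - S (max t0 0) z0) := by
    rw [map_sub]; abel
  rw [e]
  refine (norm_add_le _ _).trans (add_le_add ?_ le_rfl)
  exact ((S (max p.1 0)).le_opNorm _).trans
    (mul_le_mul_of_nonneg_right (hM ⟨p.1, hp.1⟩) (norm_nonneg _))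

lemma g_int (β : ℝ) (hβ : 0 < β) (a b : ℝ) : IntervalIntegrable (g β) volume a b := by
  unfold g
  exact (intervalIntegral.intervalIntegrable_rpow' (by linarith)).div_const _

lemma g_int' (β : ℝ) (hβ : 0 < β) (t a b : ℝ) :
    IntervalIntegrable (fun s => g β (t - s)) volume a b := by
  have := (g_int β hβ (t - a) (t - b)).comp_sub_left t
  simpa using this

lemma g_cont (β : ℝ) (hβ : 1 ≤ β) : Continuous (g β) := by
  unfold g
  exact (Real.continuous_rpow_const (by linarith)).div_const _

lemma g_one (t : ℝ) : g 1 t = 1 := by simp [g]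

lemma g_prim (β : ℝ) (hβ : 0 < β) (t : ℝ) : ∫ s in (0:ℝ)..t, g β s = g (β + 1) t := by
  unfold g
  rw [intervalIntegral.integral_div, integral_rpow (Or.inl (by linarith)),
    Real.Gamma_add_one hβ.ne', sub_add_cancel, Real.zero_rpow hβ.ne', sub_zero, add_sub_cancel_right]
  field_simp

lemma g_beta (a b : ℝ) (ha : 0 < a) (hb : 0 < b) (t : ℝ) (ht : 0 < t) :
    ∫ s in (0:ℝ)..t, g a (t - s) * g b s = g (a + b) t := by
  have h1 := Complex.betaIntegral_scaled (b : ℂ) (a : ℂ) ht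
  have h2 := Complex.Gamma_mul_Gamma_eq_betaIntegral (s := (b : ℂ)) (t := (a : ℂ)) (by simpa) (by simpa)
  have h3 : ∫ x in (0:ℝ)..t, (x : ℂ) ^ ((b : ℂ) - 1) * ((t : ℂ) - x) ^ ((a : ℂ) - 1)
      = ((∫ x in (0:ℝ)..t, x ^ (b - 1) * (t - x) ^ (a - 1) : ℝ) : ℂ) := by
    rw [← intervalIntegral.integral_ofReal]
    refine intervalIntegral.integral_congr fun x hx => ?_
    rw [uIcc_of_le ht.le] at hx
    rw [Complex.ofReal_mul, Complex.ofReal_cpow hx.1, Complex.ofReal_cpow (sub_nonneg.2 hx.2)]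
    push_cast
    rfl
  have hGab : Real.Gamma (b + a) ≠ 0 := (Real.Gamma_pos_of_pos (by linarith)).ne'
  have hGa : Real.Gamma a ≠ 0 := (Real.Gamma_pos_of_pos (by linarith)).ne'
  have hGb : Real.Gamma b ≠ 0 := (Real.Gamma_pos_of_pos (by linarith)).ne'
  have h4 : (∫ x in (0:ℝ)..t, x ^ (b - 1) * (t - x) ^ (a - 1)) * Real.Gamma (b + a)
      = t ^ (b + a - 1) * (Real.Gamma b * Real.Gamma a) := by
    have : (((∫ x in (0:ℝ)..t, x ^ (b - 1) * (t - x) ^ (a - 1)) * Real.Gamma (b + a) : ℝ) : ℂ)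
      = ((t ^ (b + a - 1) * (Real.Gamma b * Real.Gamma a) : ℝ) : ℂ) := by
      rw [Complex.ofReal_mul, ← h3, h1, Complex.ofReal_mul, Complex.ofReal_mul,
        Complex.ofReal_cpow ht.le, ← Complex.Gamma_ofReal, ← Complex.Gamma_ofReal,
        ← Complex.Gamma_ofReal, h2]
      push_cast
      ring
    exact_mod_cast this
  have h5 : ∫ s in (0:ℝ)..t, g a (t - s) * g b s
      = (∫ x in (0:ℝ)..t, x ^ (b - 1) * (t - x) ^ (a - 1)) / (Real.Gamma b * Real.Gamma a) := by
    rw [← intervalIntegral.integral_div]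
    refine intervalIntegral.integral_congr fun x _ => ?_
    simp only [g]
    field_simp
  rw [h5, g, div_eq_div_iff (by positivity) (by rwa [add_comm]), add_comm a b, h4]

/-- Fractional integral. -/
noncomputable def J (β : ℝ) (φ : ℝ → X) (t : ℝ) : X := ∫ s in (0:ℝ)..t, g β (t - s) • φ s

lemma J_congr (β : ℝ) (φ ψ : ℝ → X) (t : ℝ) (ht : 0 ≤ t) (h : ∀ s ∈ Icc 0 t, φ s = ψ s) :
    J β φ t = J β ψ t := by
  refine intervalIntegral.integral_congr fun s hs => ?_
  rw [uIcc_of_le ht] at hs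
  simp only [h s hs]

lemma J_add (β : ℝ) (hβ : 1 ≤ β) (φ ψ : ℝ → X) (hφ : Continuous φ) (hψ : Continuous ψ) (t : ℝ) :
    J β (fun s => φ s + ψ s) t = J β φ t + J β ψ t := by
  have hg := g_cont β hβ
  unfold J
  rw [← intervalIntegral.integral_add]
  · simp only [smul_add]
  · exact Continuous.intervalIntegrable (by fun_prop) _ _
  · exact Continuous.intervalIntegrable (by fun_prop) _ _

lemma J_flip (β : ℝ) (φ : ℝ → X) (t : ℝ) :
    J β φ t = ∫ s in (0:ℝ)..t, g β s • φ (t - s) := by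
  have := intervalIntegral.integral_comp_sub_left (a := 0) (b := t)
    (fun s => g β s • φ (t - s)) t
  simpa [J] using this

lemma J_prim (β : ℝ) (hβ : 0 < β) (φ : ℝ → X) (hφ : Continuous φ) (t : ℝ) (ht : 0 ≤ t) :
    J (β + 1) φ t = J β (fun u => ∫ s in (0:ℝ)..u, φ s) t := by
  have h := (tri_swap t ht (fun u => g β (t - u)) (fun _ => 1) (g_int' β hβ t 0 t)
    (by simp) (fun _ s => φ s) (hφ.comp continuous_snd)).2
  simp only [mul_one, intervalIntegral.integral_smul, intervalIntegral.integral_smul_const] at h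
  unfold J
  rw [h]
  refine intervalIntegral.integral_congr fun s _ => ?_
  have : ∫ u in s..t, g β (t - u) = g (β + 1) (t - s) := by
    rw [intervalIntegral.integral_comp_sub_left (g β) t, sub_self, g_prim β hβ]
  simp only [this]

lemma J_comm (β : ℝ) (hβ : 0 < β) (φ : ℝ → X) (hφ : Continuous φ) (t : ℝ) (ht : 0 ≤ t) :
    ∫ u in (0:ℝ)..t, J β φ u = J β (fun u => ∫ s in (0:ℝ)..u, φ s) t := by
  have h := (tri_swap t ht (fun _ => 1) (g β) (by simp) (g_int β hβ 0 t)
    (fun u s => φ (u - s)) (hφ.comp (continuous_fst.sub continuous_snd))).2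
  simp only [one_mul, intervalIntegral.integral_smul] at h
  simp only [J_flip]
  rw [h]
  refine intervalIntegral.integral_congr fun s _ => ?_
  simp

lemma J_conv (β : ℝ) (hβ : 0 < β) (k : ℝ → ℝ → X) (hk : Continuous (Function.uncurry k))
    (t : ℝ) (ht : 0 ≤ t) :
    IntervalIntegrable (fun s => J β (fun τ => k τ s) (t - s)) volume 0 t ∧
    J β (fun u => ∫ s in (0:ℝ)..u, k (u - s) s) t
      = ∫ s in (0:ℝ)..t, J β (fun τ => k τ s) (t - s) := by
  have h := tri_swap t ht (fun u => g β (t - u)) (fun _ => 1) (g_int' β hβ t 0 t)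
    (by simp) (fun u s => k (u - s) s)
    (hk.comp ((continuous_fst.sub continuous_snd).prodMk continuous_snd))
  simp only [mul_one, intervalIntegral.integral_smul] at h
  have e : ∀ s, ∫ u in s..t, g β (t - u) • k (u - s) s = J β (fun τ => k τ s) (t - s) := by
    intro s
    have := intervalIntegral.integral_comp_sub_right (a := s) (b := t)
      (fun σ => g β (t - s - σ) • k σ s) s
    simpa [J] using this
  simp only [e] at h
  exact h

lemma J_J (a b : ℝ) (ha : 0 < a) (hb : 1 ≤ b) (φ : ℝ → X) (hφ : Continuous φ)
    (t : ℝ) (ht : 0 ≤ t) :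
    J a (J b φ) t = J (a + b) φ t := by
  have hg := g_cont b hb
  have h := (J_conv a ha (fun τ s => g b τ • φ s) (by
    simp only [Function.uncurry_def]; fun_prop) t ht).2
  have h' : J a (J b φ) t = ∫ s in (0:ℝ)..t, J a (fun τ => g b τ • φ s) (t - s) := h
  rw [h', J]
  have hne : ∀ᵐ s : ℝ, s ≠ t := by
    simp [ae_iff]
  refine intervalIntegral.integral_congr_ae ?_
  filter_upwards [hne] with s hs hs'
  rw [uIoc_of_le ht] at hs'
  have hpos : 0 < t - s := sub_pos.2 (lt_of_le_of_ne hs'.2 hs)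
  rw [J, ← g_beta a b ha (by linarith) _ hpos, ← intervalIntegral.integral_smul_const]
  simp only [smul_smul]

lemma J_cont (β : ℝ) (hβ : 0 < β) (φ : ℝ → X) (hφ : Continuous φ) :
    ∃ G : ℝ → X, Continuous G ∧ ∀ t, 0 ≤ t → J β φ t = G t := by
  refine ⟨fun t => t ^ β • ∫ σ in (0:ℝ)..1, g β (1 - σ) • φ (t * σ), ?_, ?_⟩
  · refine (Real.continuous_rpow_const hβ.le).smul ?_
    rw [continuous_iff_continuousAt]
    intro t0
    obtain ⟨C, hC⟩ := ((isCompact_Icc (a := t0 - 1) (b := t0 + 1)).prod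
      (isCompact_Icc (a := (0:ℝ)) (b := 1))).exists_bound_of_continuousOn
      (f := fun p : ℝ × ℝ => φ (p.1 * p.2)) (by fun_prop)
    refine intervalIntegral.continuousAt_of_dominated_interval
      (bound := fun σ => ‖g β (1 - σ)‖ * C) ?_ ?_ ?_ ?_
    · refine Filter.Eventually.of_forall fun t => ?_
      have := (g_int' β hβ 1 0 1).def'
      exact this.aestronglyMeasurable.smul (Continuous.aestronglyMeasurable (by fun_prop))
    · have hn : Icc (t0 - 1) (t0 + 1) ∈ nhds t0 := Icc_mem_nhds (by linarith) (by linarith)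
      filter_upwards [hn] with t ht
      refine Filter.Eventually.of_forall fun σ hσ => ?_
      rw [uIoc_of_le zero_le_one] at hσ
      rw [norm_smul]
      exact mul_le_mul_of_nonneg_left (hC (t, σ) ⟨ht, Ioc_subset_Icc_self hσ⟩) (norm_nonneg _)
    · exact (g_int' β hβ 1 0 1).norm.mul_const C
    · refine Filter.Eventually.of_forall fun σ hσ => ?_
      exact Continuous.continuousAt (by fun_prop)
  · intro t ht
    rcases ht.eq_or_lt with rfl | ht
    · simp [J, Real.zero_rpow hβ.ne']
    · have h := intervalIntegral.smul_integral_comp_mul_left (a := 0) (b := 1)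
        (fun s => g β (t - s) • φ s) t
      simp only [mul_zero, mul_one] at h
      rw [J, ← h]
      beta_reduce
      have e : t ^ β = t * t ^ (β - 1) := by
        rw [mul_comm, ← Real.rpow_add_one ht.ne', sub_add_cancel]
      rw [e, mul_smul, ← intervalIntegral.integral_smul (t ^ (β - 1))]
      congr 1
      refine intervalIntegral.integral_congr fun σ hσ => ?_
      rw [uIcc_of_le zero_le_one] at hσ
      simp only [smul_smul, g]
      congr 1
      rw [show t - t * σ = t * (1 - σ) by ring, Real.mul_rpow ht.le (sub_nonneg.2 hσ.2)]
      ring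

lemma K_graph (α : ℝ) (hα1 : 1 < α)
    (A : X →ₗ.[ℂ] X) (hA_closed : IsClosed (A.graph : Set (X × X)))
    (hA_dense : Dense (A.domain : Set X))
    (S : ℝ → X →L[ℂ] X)
    (hS_cont : ∀ x : X, ContinuousOn (fun t => S t x) (Ici (0:ℝ)))
    (hS_comm : ∀ t : ℝ, 0 ≤ t → ∀ x y : X, (x, y) ∈ A.graph → (S t x, S t y) ∈ A.graph)
    (hS_eq : ∀ t : ℝ, 0 ≤ t → ∀ x y : X, (x, y) ∈ A.graph →
      S t x = x + ∫ s in (0:ℝ)..t, g α (t - s) • S s y)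
    (τ : ℝ) (hτ : 0 ≤ τ) (z : X) :
    (J α (fun s => S (max s 0) z) τ, S τ z - z) ∈ A.graph := by
  have hg := g_cont α hα1.le
  have hj := S_joint S hS_cont
  have hjz : ∀ z, Continuous (fun s : ℝ => S (max s 0) z) := fun z =>
    hj.comp (continuous_id.prodMk continuous_const)
  have hcont : Continuous (fun z => J α (fun s => S (max s 0) z) τ) := by
    unfold J
    refine intervalIntegral.continuous_parametric_intervalIntegral_of_continuous' ?_ _ _
    have h1 : Continuous (fun p : X × ℝ => S (max p.2 0) p.1) :=
      hj.comp (continuous_snd.prodMk continuous_fst)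
    simp only [Function.uncurry_def]
    exact (hg.comp (continuous_const.sub continuous_snd)).smul h1
  have hcl : IsClosed {z | (J α (fun s => S (max s 0) z) τ, S τ z - z) ∈ A.graph} :=
    hA_closed.preimage (hcont.prodMk ((S τ).continuous.sub continuous_id))
  have hsub : (A.domain : Set X) ⊆ {z | (J α (fun s => S (max s 0) z) τ, S τ z - z) ∈ A.graph} := by
    intro z hz
    have hz' : (z, A ⟨z, hz⟩) ∈ A.graph := A.mem_graph ⟨z, hz⟩
    simp only [mem_setOf_eq]
    have e : S τ z - z = J α (fun s => S (max s 0) (A ⟨z, hz⟩)) τ := by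
      rw [hS_eq τ hτ _ _ hz', add_sub_cancel_left]
      refine J_congr α _ _ τ hτ fun s hs => ?_
      rw [max_eq_left hs.1]
    rw [e]
    refine graph_integral A.graph hA_closed _ _ τ hτ ?_ ?_ ?_
    · have := hjz z
      exact ((hg.comp (continuous_const.sub continuous_id)).smul this).intervalIntegrable _ _
    · have := hjz (A ⟨z, hz⟩)
      exact ((hg.comp (continuous_const.sub continuous_id)).smul this).intervalIntegrable _ _
    · intro s hs
      exact graph_real_smul _ _ _ _ (hS_comm _ (le_max_right s 0) _ _ hz')
  exact hcl.closure_subset_iff.2 hsub (hA_dense z)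

lemma conv_repr (α : ℝ) (hα1 : 1 < α)
    (A : X →ₗ.[ℂ] X) (hA_closed : IsClosed (A.graph : Set (X × X)))
    (hA_dense : Dense (A.domain : Set X))
    (S : ℝ → X →L[ℂ] X)
    (hS_cont : ∀ x : X, ContinuousOn (fun t => S t x) (Ici (0:ℝ)))
    (hS_comm : ∀ t : ℝ, 0 ≤ t → ∀ x y : X, (x, y) ∈ A.graph → (S t x, S t y) ∈ A.graph)
    (hS_eq : ∀ t : ℝ, 0 ≤ t → ∀ x y : X, (x, y) ∈ A.graph →
      S t x = x + ∫ s in (0:ℝ)..t, g α (t - s) • S s y)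
    (r : ℝ) (f w : ℝ → X) (hf : Continuous f) (hw : Continuous w)
    (hv : ∀ t ∈ Icc (0:ℝ) r, ((∫ s in (0:ℝ)..t, Pa α S (t - s) (f s)), w t) ∈ A.graph)
    (t : ℝ) (ht : t ∈ Icc 0 r) :
    ∫ s in (0:ℝ)..t, Pa α S (t - s) (f s) = J α (fun s => f s + w s) t := by
  have hj := S_joint S hS_cont
  set k : ℝ → ℝ → X := fun τ s => S (max τ 0) (f s) with hkdef
  have hk : Continuous (Function.uncurry k) :=
    hj.comp (continuous_fst.prodMk (hf.comp continuous_snd))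
  set F : ℝ → X := fun u => ∫ s in (0:ℝ)..u, k (u - s) s with hF
  have hFc : Continuous F := by
    refine intervalIntegral.continuous_parametric_intervalIntegral_of_continuous
      (f := fun u s => k (u - s) s) ?_ continuous_id
    exact hk.comp ((continuous_fst.sub continuous_snd).prodMk continuous_snd)
  have hvJ : ∀ t, 0 ≤ t → ∫ s in (0:ℝ)..t, Pa α S (t - s) (f s) = J (α - 1) F t := by
    intro t ht
    rw [(J_conv (α - 1) (by linarith) k hk t ht).2]
    refine intervalIntegral.integral_congr fun s hs => ?_
    rw [uIcc_of_le ht] at hs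
    refine J_congr (α - 1) (fun τ => S τ (f s)) _ (t - s) (sub_nonneg.2 hs.2) fun τ hτ => ?_
    simp [hkdef, max_eq_left hτ.1]
  have hFeq : ∀ t ∈ Icc 0 r, F t = ∫ s in (0:ℝ)..t, (f s + w s) := by
    intro t ht
    -- first membership
    have h1 : (∫ u in (0:ℝ)..t, J (α - 1) F u, F t - ∫ s in (0:ℝ)..t, f s) ∈ A.graph := by
      have e1 : ∫ u in (0:ℝ)..t, J (α - 1) F u = J α F t := by
        rw [J_comm _ (by linarith) F hFc t ht.1, ← J_prim _ (by linarith) F hFc t ht.1,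
          sub_add_cancel]
      have h2 := J_conv α (by linarith) k hk t ht.1
      have hki : Continuous (fun s => k (t - s) s) :=
        hk.comp ((continuous_const.sub continuous_id).prodMk continuous_id)
      rw [e1, h2.2, hF, ← intervalIntegral.integral_sub (hki.intervalIntegrable _ _)
        (hf.intervalIntegrable _ _)]
      refine graph_integral A.graph hA_closed _ _ t ht.1 h2.1
        ((hki.sub hf).intervalIntegrable _ _) fun s hs => ?_
      have h3 := K_graph α hα1 A hA_closed hA_dense S hS_cont hS_comm hS_eq (t - s)
        (sub_nonneg.2 hs.2) (f s)
      simpa [hkdef, max_eq_left (sub_nonneg.2 hs.2)] using h3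
    obtain ⟨G, hGc, hG⟩ := J_cont (α - 1) (by linarith) F hFc
    have h2 : (∫ u in (0:ℝ)..t, J (α - 1) F u, ∫ s in (0:ℝ)..t, w s) ∈ A.graph := by
      refine graph_integral A.graph hA_closed _ _ t ht.1 ?_ (hw.intervalIntegrable _ _) ?_
      · refine (hGc.intervalIntegrable 0 t).congr ?_
        intro s hs
        rw [uIoc_of_le ht.1] at hs
        exact (hG s hs.1.le).symm
      · intro s hs
        have := hv s ⟨hs.1, hs.2.trans ht.2⟩
        rwa [hvJ s hs.1] at this
    have h3 := A.mem_graph_snd_inj h1 h2 rfl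
    rw [intervalIntegral.integral_add (hf.intervalIntegrable _ _) (hw.intervalIntegrable _ _), ← h3]
    abel
  rw [hvJ t ht.1, J_congr (α - 1) F (fun u => ∫ s in (0:ℝ)..u, (f s + w s)) t ht.1
    (fun s hs => hFeq s ⟨hs.1, hs.2.trans ht.2⟩), ← J_prim _ (by linarith) (fun s => f s + w s) (hf.add hw) t ht.1,
    sub_add_cancel]

end aux

theorem stmt_12
    {X : Type*} [NormedAddCommGroup X] [NormedSpace ℂ X] [CompleteSpace X]
    (α : ℝ) (hα1 : 1 < α) (hα2 : α < 2)
    (A : X →ₗ.[ℂ] X) (hA_closed : IsClosed (A.graph : Set (X × X)))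
    (hA_dense : Dense (A.domain : Set X))
    (S : ℝ → X →L[ℂ] X)
    (hS_cont : ∀ x : X, ContinuousOn (fun t => S t x) (Ici (0:ℝ)))
    (hS_zero : S 0 = 1)
    (hS_dom : ∀ t : ℝ, 0 ≤ t → ∀ x ∈ A.domain, S t x ∈ A.domain)
    (hS_comm : ∀ t : ℝ, 0 ≤ t → ∀ x y : X, (x, y) ∈ A.graph → (S t x, S t y) ∈ A.graph)
    (hS_eq : ∀ t : ℝ, 0 ≤ t → ∀ x y : X, (x, y) ∈ A.graph →
      S t x = x + ∫ s in (0:ℝ)..t, g α (t - s) • S s y)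
    (r : ℝ) (hr : 0 < r) (f : ℝ → X) (hf : ContinuousOn f (Icc 0 r))
    (x y : X) (hx : x ∈ A.domain) (hy : y ∈ A.domain)
    (hw : ∃ w : ℝ → X, ContinuousOn w (Icc 0 r) ∧
      ∀ t ∈ Icc (0:ℝ) r,
        ((∫ s in (0:ℝ)..t, Pa α S (t - s) (f s)), w t) ∈ A.graph) :
    IsStrongSolution α A r f x y
      (fun t => S t x + (∫ s in (0:ℝ)..t, S s y) + ∫ s in (0:ℝ)..t, Pa α S (t - s) (f s)) := by
  obtain ⟨w, hwc, hwg⟩ := hw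
  have hj := S_joint S hS_cont
  have hjz : ∀ z, Continuous (fun s : ℝ => S (max s 0) z) := fun z =>
    hj.comp (continuous_id.prodMk continuous_const)
  set f' : ℝ → X := IccExtend hr.le ((Icc 0 r).restrict f) with hf'
  set w0 : ℝ → X := IccExtend hr.le ((Icc 0 r).restrict w) with hw0
  have hf'c : Continuous f' := (continuousOn_iff_continuous_restrict.1 hf).Icc_extend'
  have hw0c : Continuous w0 := (continuousOn_iff_continuous_restrict.1 hwc).Icc_extend'
  have hff : ∀ t ∈ Icc 0 r, f' t = f t := fun t ht => by
    rw [hf', IccExtend_of_mem _ _ ht]; rfl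
  have hww : ∀ t ∈ Icc 0 r, w0 t = w t := fun t ht => by
    rw [hw0, IccExtend_of_mem _ _ ht]; rfl
  have hvv : ∀ t ∈ Icc 0 r, ∫ s in (0:ℝ)..t, Pa α S (t - s) (f' s)
      = ∫ s in (0:ℝ)..t, Pa α S (t - s) (f s) := by
    intro t ht
    refine intervalIntegral.integral_congr fun s hs => ?_
    rw [uIcc_of_le ht.1] at hs
    simp only [hff s ⟨hs.1, hs.2.trans ht.2⟩]
  have hv := conv_repr α hα1 A hA_closed hA_dense S hS_cont hS_comm hS_eq r f' w0 hf'c hw0c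
    (fun t ht => by rw [hvv t ht, hww t ht]; exact hwg t ht)
  set Ax : X := A ⟨x, hx⟩ with hAx
  set Ay : X := A ⟨y, hy⟩ with hAy
  have hxg : (x, Ax) ∈ A.graph := A.mem_graph ⟨x, hx⟩
  have hyg : (y, Ay) ∈ A.graph := A.mem_graph ⟨y, hy⟩
  have hSint : ∀ z, ∀ t, 0 ≤ t → ∫ s in (0:ℝ)..t, S s z = ∫ s in (0:ℝ)..t, S (max s 0) z := by
    intro z t ht
    refine intervalIntegral.integral_congr fun s hs => ?_
    rw [uIcc_of_le ht] at hs
    simp only [max_eq_left hs.1]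
  have hSJ : ∀ t, 0 ≤ t → ∀ p q, (p, q) ∈ A.graph →
      S t p = p + J α (fun s => S (max s 0) q) t := by
    intro t ht p q hpq
    rw [hS_eq t ht p q hpq]
    congr 1
    refine J_congr α (fun s => S s q) _ t ht fun s hs => ?_
    simp only [max_eq_left hs.1]
  have hprim : ∀ φ : ℝ → X, Continuous φ → Continuous (fun t => ∫ s in (0:ℝ)..t, φ s) :=
    fun φ hφ => intervalIntegral.continuous_primitive (fun a b => hφ.intervalIntegrable a b) 0
  have hIy := hprim _ (hjz Ay)
  set q : ℝ → X := fun t => S (max t 0) Ax + ∫ s in (0:ℝ)..t, S (max s 0) Ay with hq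
  have hqc : Continuous q := (hjz Ax).add hIy
  set h : ℝ → X := fun t => q t + (f' t + w0 t) with hh
  have hhc : Continuous h := hqc.add (hf'c.add hw0c)
  set u : ℝ → X := fun t => S t x + (∫ s in (0:ℝ)..t, S s y) +
    ∫ s in (0:ℝ)..t, Pa α S (t - s) (f s) with hu
  have hurep : ∀ t ∈ Icc 0 r, u t = x + t • y + J α h t := by
    intro t ht
    have hJc : Continuous (fun s => S (max s 0) y - y) := (hjz y).sub continuous_const
    have e1 : ∫ s in (0:ℝ)..t, S s y = t • y + J α (fun u => ∫ s in (0:ℝ)..u, S (max s 0) Ay) t := by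
      rw [← J_comm α (by linarith) _ (hjz Ay) t ht.1, hSint y t ht.1]
      have e2 : ∫ s in (0:ℝ)..t, J α (fun s => S (max s 0) Ay) s
          = ∫ s in (0:ℝ)..t, (S (max s 0) y - y) := by
        refine intervalIntegral.integral_congr fun s hs => ?_
        rw [uIcc_of_le ht.1] at hs
        simp only [max_eq_left hs.1]
        rw [hSJ s hs.1 y Ay hyg]
        abel
      rw [e2, intervalIntegral.integral_sub ((hjz y).intervalIntegrable _ _)
        (continuous_const.intervalIntegrable _ _)]
      simp
    have e3 : J α h t = J α (fun s => S (max s 0) Ax) t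
        + J α (fun u => ∫ s in (0:ℝ)..u, S (max s 0) Ay) t + J α (fun s => f' s + w0 s) t := by
      rw [hh, J_add α hα1.le q (fun s => f' s + w0 s) hqc (hf'c.add hw0c), hq, J_add α hα1.le _ _ (hjz Ax) hIy]
    simp only [hu]
    rw [e1, e3, hSJ t ht.1 x Ax hxg, ← hvv t ht, hv t ht]
    abel
  obtain ⟨G, hGc, hG⟩ := J_cont (α - 1) (by linarith) h hhc
  have hJG : ∀ t, 0 ≤ t → J α h t = ∫ s in (0:ℝ)..t, G s := by
    intro t ht
    have : α = (α - 1) + 1 := by ring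
    rw [this, J_prim (α - 1) (by linarith) h hhc t ht, ← J_comm (α - 1) (by linarith) h hhc t ht]
    refine intervalIntegral.integral_congr fun s hs => ?_
    rw [uIcc_of_le ht] at hs
    exact hG s hs.1
  have hFTC : ∀ φ : ℝ → X, Continuous φ → ∀ t,
      HasDerivAt (fun τ => ∫ s in (0:ℝ)..τ, φ s) (φ t) t := fun φ hφ t =>
    (hφ.integral_hasStrictDerivAt 0 t).hasDerivAt
  have hderiv : ∀ t ∈ Icc (0:ℝ) r, HasDerivWithinAt u (y + G t) (Icc 0 r) t := by
    intro t ht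
    have h1 : HasDerivAt (fun τ : ℝ => x + τ • y + ∫ s in (0:ℝ)..τ, G s) (y + G t) t := by
      have := (((hasDerivAt_id t).smul_const y).const_add x).add (hFTC G hGc t)
      rw [one_smul] at this
      exact this
    refine h1.hasDerivWithinAt.congr_of_mem (fun s hs => ?_) ht
    rw [hurep s hs, hJG s hs.1]
  have hW : ∀ t ∈ Icc (0:ℝ) r, ∫ s in (0:ℝ)..t, g (2 - α) (t - s) • (u s - x - s • y)
      = ∫ s in (0:ℝ)..t, ∫ σ in (0:ℝ)..s, h σ := by
    intro t ht
    have e1 := J_congr (2 - α) (fun s => u s - x - s • y) (J α h) t ht.1 (fun s hs => by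
      rw [hurep s ⟨hs.1, hs.2.trans ht.2⟩]; abel)
    have e2 := J_J (2 - α) α (by linarith) hα1.le h hhc t ht.1
    rw [show 2 - α + α = (1:ℝ) + 1 by ring, J_prim 1 one_pos h hhc t ht.1] at e2
    refine e1.trans (e2.trans ?_)
    simp [J, g_one]
  refine ⟨fun t => q t + w0 t, fun t => y + G t, fun t => ∫ s in (0:ℝ)..t, h s, h,
    fun t ht => (hderiv t ht).continuousWithinAt, ?_, (hqc.add hw0c).continuousOn, hderiv,
    (continuous_const.add hGc).continuousOn, ?_, fun t _ => (hFTC h hhc t).hasDerivWithinAt,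
    hhc.continuousOn, ?_, ?_, ?_⟩
  · intro t ht
    have m1 : (S t x, S (max t 0) Ax) ∈ A.graph := by
      rw [max_eq_left ht.1]; exact hS_comm t ht.1 _ _ hxg
    have m2 : (∫ s in (0:ℝ)..t, S s y, ∫ s in (0:ℝ)..t, S (max s 0) Ay) ∈ A.graph := by
      rw [hSint y t ht.1]
      exact graph_integral A.graph hA_closed _ _ t ht.1 ((hjz y).intervalIntegrable _ _)
        ((hjz Ay).intervalIntegrable _ _) fun s _ => hS_comm _ (le_max_right s 0) _ _ hyg
    have m3 := hwg t ht
    rw [← hww t ht] at m3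
    exact A.graph.add_mem (A.graph.add_mem m1 m2) m3
  · intro t ht
    exact (hFTC _ (hprim h hhc) t).hasDerivWithinAt.congr_of_mem (fun s hs => hW s hs) ht
  · intro t ht
    simp only [hh]
    rw [hff t ht]; abel
  · simp [hu, hS_zero]
  · have := hG 0 le_rfl
    simp only [J, intervalIntegral.integral_same] at this
    simp [← this]
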